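/- arXiv:2301.01272 — 4 statements merged into one kernel-verified Lean document; each statement's English description precedes it below -/
import Mathlib

section
/- Let P be an n×n real matrix (n ≥ 1) that has at least one nested sequence of principal minors M_1, …, M_n such that (−1)^k·M_k > 0 for every k = 1, …, n. Then there exists an n×n diagonal matrix D with positive diagonal entries such that all eigenvalues of D·P are real, negative and distinct. -/
open Matrix Polynomial

/-!
Multiplying row `i` of `P` by `d i = 0` for all `i ∉ S` splits off zero eigenvalues: the
characteristic polynomial becomes `X ^ (n - #S) * q`, and `q(0)` has the sign of
`(-1) ^ #S` times the principal minor of `P` on `S`. Start with `d = 0` and switch on the entries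
of `d` one by one, along the chain of index sets. The sign of `q(0)` provides one more sign change
of the characteristic polynomial, at a negative point close to `0`, while the sign changes
found so far survive as long as the new entry of `d` is small enough. Once all entries are positive,
there are enough sign changes to separate `n` distinct negative roots.
-/

open Filter Topology

section SignChanges

lemma exists_mem_Ioo_eq_zero_of_mul_neg {α β : Type*} [ConditionallyCompleteLinearOrder α]
    [TopologicalSpace α] [OrderTopology α] [DenselyOrdered α] [Ring β] [LinearOrder β]
    [IsStrictOrderedRing β] [TopologicalSpace β] [OrderClosedTopology β] {f : α → β} {a b : α}
    (hab : a ≤ b) (hf : ContinuousOn f (Set.Icc a b)) (h : f a * f b < 0) :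
    ∃ x ∈ Set.Ioo a b, f x = 0 := by
  rcases mul_neg_iff.mp h with ⟨ha, hb⟩ | ⟨ha, hb⟩
  · exact intermediate_value_Ioo' hab hf ⟨hb, ha⟩
  · exact intermediate_value_Ioo hab hf ⟨ha, hb⟩

lemma strictMono_snoc {α : Type*} [Preorder α] {k : ℕ} {t : Fin k → α} {b : α}
    (ht : StrictMono t) (hb : ∀ j, t j < b) : StrictMono (Fin.snoc t b : Fin (k + 1) → α) := by
  intro i j hij
  induction j using Fin.lastCases with
  | last =>
    obtain ⟨i, rfl⟩ := Fin.eq_castSucc_of_ne_last hij.ne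
    simpa using hb i
  | cast j =>
    obtain ⟨i, rfl⟩ := Fin.eq_castSucc_of_ne_last (hij.trans_le (Fin.le_last _)).ne
    simpa using ht (Fin.castSucc_lt_castSucc_iff.mp hij)

lemma eq_prod_X_sub_C_of_injective_roots {R ι : Type*} [CommRing R] [IsDomain R] [Fintype ι]
    {p : R[X]} {μ : ι → R} (hp : p.Monic) (hdeg : p.natDegree = Fintype.card ι)
    (hμ : Function.Injective μ) (hroot : ∀ i, p.IsRoot (μ i)) : p = ∏ i, (X - C (μ i)) := by
  have hmonic : (∏ i, (X - C (μ i))).Monic := monic_prod_X_sub_C μ Finset.univ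
  have hpdeg : p.degree = Fintype.card ι := by rw [degree_eq_natDegree hp.ne_zero, hdeg]
  refine eq_of_degree_le_of_eval_index_eq Finset.univ hμ.injOn hpdeg.le ?_ ?_ fun i _ ↦ ?_
  · simp [hpdeg, degree_prod]
  · rw [hp.leadingCoeff, hmonic.leadingCoeff]
  · rw [(hroot i).eq_zero, eval_prod, Finset.prod_eq_zero (Finset.mem_univ i) (by simp)]

/-- The polynomial `p` takes values of alternating signs at the increasing negative nodes `t`.
The sign at the first node is required to be the sign of a monic `p` at `-∞`, so that a further
node can be appended on the right without changing the signs required at the old ones. -/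
structure AlternatesAt (p : ℝ[X]) {k : ℕ} (t : Fin k → ℝ) : Prop where
  strictMono : StrictMono t
  neg : ∀ j, t j < 0
  sign : ∀ j : Fin k, 0 < (-1) ^ (p.natDegree + j) * p.eval (t j)

namespace AlternatesAt

variable {p : ℝ[X]} {k : ℕ}

lemma snoc {t : Fin k → ℝ} {b : ℝ} (h : AlternatesAt p t) (htb : ∀ j, t j < b) (hb : b < 0)
    (hsign : 0 < (-1) ^ (p.natDegree + k) * p.eval b) :
    AlternatesAt p (Fin.snoc t b : Fin (k + 1) → ℝ) where
  strictMono := strictMono_snoc h.strictMono htb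
  neg j := by
    cases j using Fin.lastCases with
    | last => simpa using hb
    | cast j => simpa using h.neg j
  sign j := by
    cases j using Fin.lastCases with
    | last => simpa using hsign
    | cast j => simpa using h.sign j

lemma eval_mul_eval_neg {t : Fin (k + 1) → ℝ} (h : AlternatesAt p t) (i : Fin k) :
    p.eval (t i.castSucc) * p.eval (t i.succ) < 0 := by
  have hprod := mul_pos (h.sign i.castSucc) (h.sign i.succ)
  have hsq : ((-1 : ℝ) ^ (p.natDegree + i)) ^ 2 = 1 := by rw [← pow_mul', pow_mul]; simp
  simp only [Fin.val_castSucc, Fin.val_succ, ← add_assoc, pow_succ _ (p.natDegree + (i : ℕ))]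
    at hprod
  linear_combination hprod - p.eval (t i.castSucc) * p.eval (t i.succ) * hsq

lemma exists_strictMono_roots {t : Fin (k + 1) → ℝ} (h : AlternatesAt p t) :
    ∃ μ : Fin k → ℝ, StrictMono μ ∧ (∀ i, μ i < 0) ∧ ∀ i, p.IsRoot (μ i) := by
  have hroot (i : Fin k) : ∃ x ∈ Set.Ioo (t i.castSucc) (t i.succ), p.eval x = 0 :=
    exists_mem_Ioo_eq_zero_of_mul_neg (h.strictMono i.castSucc_lt_succ).le p.continuousOn
      (h.eval_mul_eval_neg i)
  choose μ hμ hμ_root using hroot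
  refine ⟨μ, fun i j hij ↦ ?_, fun i ↦ (hμ i).2.trans (h.neg _), hμ_root⟩
  calc μ i < t i.succ := (hμ i).2
    _ ≤ t j.castSucc := h.strictMono.monotone (Fin.succ_le_castSucc_iff.mpr hij)
    _ < μ j := (hμ j).1

end AlternatesAt

lemma eventually_nhdsLT_zero_neg_one_pow_mul_eval_X_pow_mul_pos {q : ℝ[X]} (hq : 0 < q.eval 0)
    (m : ℕ) : ∀ᶠ b in 𝓝[<] 0, 0 < (-1) ^ m * (X ^ m * q).eval b := by
  have hq_near : ∀ᶠ b in 𝓝[<] 0, 0 < q.eval b :=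
    (q.continuous.continuousAt.eventually_const_lt hq).filter_mono nhdsWithin_le_nhds
  filter_upwards [hq_near, self_mem_nhdsWithin] with b hqb hb
  have hpos : 0 < (-b) ^ m * q.eval b := mul_pos (pow_pos (neg_pos.mpr hb) m) hqb
  simpa [neg_pow b, mul_assoc] using hpos

lemma AlternatesAt.exists_succ {q : ℝ[X]} {k m : ℕ} {t : Fin k → ℝ}
    (h : AlternatesAt (X ^ m * q) t) (hdeg : (X ^ m * q).natDegree = m + k) (hq : 0 < q.eval 0) :
    ∃ t' : Fin (k + 1) → ℝ, AlternatesAt (X ^ m * q) t' := by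
  have hright : ∀ᶠ b in 𝓝[<] (0 : ℝ), ∀ j, t j < b :=
    eventually_all.mpr fun j ↦ (eventually_gt_nhds (h.neg j)).filter_mono nhdsWithin_le_nhds
  have hsign_near := eventually_nhdsLT_zero_neg_one_pow_mul_eval_X_pow_mul_pos hq m
  obtain ⟨b, hsign, htb, hb⟩ := (hsign_near.and (hright.and self_mem_nhdsWithin)).exists
  refine ⟨_, h.snoc htb hb ?_⟩
  have hparity : (-1 : ℝ) ^ (m + k + k) = (-1) ^ m := by
    rw [add_assoc, pow_add, ← two_mul, pow_mul]; simp
  rwa [hdeg, hparity]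

end SignChanges

section PrincipalMinors

variable {R ι : Type*} [CommRing R] [DecidableEq ι]

/-- The principal minor of `P` associated with the index set `S`. -/
def principalMinor (P : Matrix ι ι R) (S : Finset ι) : R :=
  (P.submatrix ((↑) : S → ι) (↑)).det

lemma eval_zero_charpoly_submatrix (A : Matrix ι ι R) (S : Finset ι) :
    (A.submatrix ((↑) : S → ι) (↑)).charpoly.eval 0 = (-1) ^ S.card * principalMinor A S := by
  simp [eval_charpoly, det_neg, principalMinor]

variable [Fintype ι]

lemma principalMinor_diagonal_mul (d : ι → R) (P : Matrix ι ι R) (S : Finset ι) :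
    principalMinor (diagonal d * P) S = (∏ i ∈ S, d i) * principalMinor P S := by
  have hsub : (diagonal d * P).submatrix ((↑) : S → ι) (↑) =
      diagonal (fun i : S ↦ d i) * P.submatrix (↑) (↑) := by
    ext i j
    simp [diagonal_mul]
  rw [principalMinor, hsub, det_mul, det_diagonal, Finset.prod_coe_sort, principalMinor]

lemma charpoly_eq_X_pow_mul_of_rows_eq_zero {A : Matrix ι ι R} {S : Finset ι}
    (hA : ∀ i ∉ S, ∀ j, A i j = 0) :
    A.charpoly = X ^ (Sᶜ).card * (A.submatrix ((↑) : S → ι) (↑)).charpoly := by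
  have hlower : ∀ i ∉ S, ∀ j ∈ S, A.charmatrix i j = 0 := fun i hi j hj ↦ by
    rw [charmatrix_apply_ne _ _ _ (ne_of_mem_of_not_mem hj hi).symm, hA i hi, C_0, neg_zero]
  have hblock : A.charmatrix.toSquareBlockProp (· ∈ S) =
      (A.submatrix ((↑) : S → ι) (↑)).charmatrix := by
    ext i j : 2
    simp [toSquareBlockProp, charmatrix_apply, diagonal_apply]
  have hdiag : A.charmatrix.toSquareBlockProp (· ∉ S) = diagonal fun _ ↦ X := by
    ext i j : 2
    simp [toSquareBlockProp, charmatrix_apply, diagonal_apply, Subtype.coe_inj, hA i i.2]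
  have hcard : Fintype.card {i // i ∉ S} = (Sᶜ).card := by simp [Finset.card_compl]
  rw [charpoly, twoBlockTriangular_det A.charmatrix (· ∈ S) hlower, hblock, hdiag, det_diagonal,
    Finset.prod_const, Finset.card_univ, hcard, mul_comm, charpoly]
  -- the two sides carry different `Fintype` instances on the elements of `S`
  congr!

end PrincipalMinors

section Scaling

variable {ι : Type*} [Fintype ι] [DecidableEq ι] {P : Matrix ι ι ℝ} {S : Finset ι}

lemma AlternatesAt.eventually_charpoly {A : Matrix ι ι ℝ} {k : ℕ} {t : Fin k → ℝ}
    (h : AlternatesAt A.charpoly t) : ∀ᶠ B in 𝓝 A, AlternatesAt B.charpoly t := by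
  have hcont (j : Fin k) : Continuous fun B : Matrix ι ι ℝ ↦
      (-1) ^ (Fintype.card ι + j) * B.charpoly.eval (t j) := by
    simp only [eval_charpoly]
    fun_prop
  have hsign : ∀ᶠ B in 𝓝 A, ∀ j : Fin k,
      0 < (-1) ^ (Fintype.card ι + j) * B.charpoly.eval (t j) :=
    eventually_all.mpr fun j ↦ (hcont j).continuousAt.eventually_const_lt (by simpa using h.sign j)
  filter_upwards [hsign] with B hB
  exact ⟨h.strictMono, h.neg, by simpa using hB⟩

lemma AlternatesAt.exists_pos_update {d : ι → ℝ} {a : ι} {k : ℕ} {t : Fin k → ℝ} (hda : d a = 0)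
    (h : AlternatesAt (diagonal d * P).charpoly t) :
    ∃ e > 0, AlternatesAt (diagonal (Function.update d a e) * P).charpoly t := by
  have hcont : Continuous fun e : ℝ ↦ diagonal (Function.update d a e) * P := by fun_prop
  have hda_update : Function.update d a 0 = d := hda ▸ Function.update_eq_self a d
  have hnear : ∀ᶠ e in 𝓝 (0 : ℝ),
      AlternatesAt (diagonal (Function.update d a e) * P).charpoly t := by
    refine hcont.continuousAt.eventually (AlternatesAt.eventually_charpoly ?_)
    simpa only [hda_update] using h
  obtain ⟨e, he, he_pos⟩ :=
    ((hnear.filter_mono nhdsWithin_le_nhds).and (self_mem_nhdsWithin (s := Set.Ioi 0))).exists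
  exact ⟨e, he_pos, he⟩

lemma AlternatesAt.exists_succ_of_principalMinor {d : ι → ℝ} {t : Fin S.card → ℝ}
    (hpos : ∀ i ∈ S, 0 < d i) (hzero : ∀ i ∉ S, d i = 0)
    (hminor : 0 < (-1) ^ S.card * principalMinor P S)
    (h : AlternatesAt (diagonal d * P).charpoly t) :
    ∃ t' : Fin (S.card + 1) → ℝ, AlternatesAt (diagonal d * P).charpoly t' := by
  set A := diagonal d * P with hA
  have hdeg : A.charpoly.natDegree = (Sᶜ).card + S.card := by
    rw [charpoly_natDegree_eq_dim, Finset.card_compl_add_card]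
  rw [charpoly_eq_X_pow_mul_of_rows_eq_zero (S := S)
    fun i hi j ↦ by simp [hA, diagonal_mul, hzero i hi]] at h hdeg ⊢
  refine h.exists_succ hdeg ?_
  rw [eval_zero_charpoly_submatrix, hA, principalMinor_diagonal_mul, mul_left_comm]
  exact mul_pos (Finset.prod_pos hpos) hminor

/-- Some diagonal matrix `D`, with positive entries on `S` and zeros elsewhere, is such that the
characteristic polynomial of `D * P` has at least `#S` sign changes on the negative axis. -/
def HasAlternatingScaling (P : Matrix ι ι ℝ) (S : Finset ι) : Prop :=
  ∃ d : ι → ℝ, (∀ i ∈ S, 0 < d i) ∧ (∀ i ∉ S, d i = 0) ∧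
    ∃ t : Fin (S.card + 1) → ℝ, AlternatesAt (diagonal d * P).charpoly t

namespace HasAlternatingScaling

lemma empty (P : Matrix ι ι ℝ) : HasAlternatingScaling P ∅ := by
  refine ⟨0, by simp, by simp, AlternatesAt.exists_succ_of_principalMinor (t := Fin.elim0)
    (by simp) (by simp) (by simp [principalMinor]) ⟨?_, ?_, ?_⟩⟩ <;> exact fun j ↦ j.elim0

lemma extend {T : Finset ι} (h : HasAlternatingScaling P S) (hST : S ⊆ T)
    (hcard : T.card = S.card + 1) (hminor : 0 < (-1) ^ T.card * principalMinor P T) :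
    HasAlternatingScaling P T := by
  obtain ⟨d, hpos, hzero, ht⟩ := h
  rw [← hcard] at ht
  obtain ⟨t, ht⟩ := ht
  obtain ⟨a, ha, rfl⟩ := Finset.exists_eq_insert_iff.mpr ⟨hST, hcard.symm⟩
  obtain ⟨e, he, hte⟩ := ht.exists_pos_update (hzero a ha)
  have hpos' : ∀ i ∈ insert a S, 0 < Function.update d a e i := by
    intro i hi
    rcases Finset.mem_insert.mp hi with rfl | hi
    · rwa [Function.update_self]
    · rw [Function.update_of_ne (ne_of_mem_of_not_mem hi ha)]
      exact hpos i hi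
  have hzero' : ∀ i ∉ insert a S, Function.update d a e i = 0 := by
    simp +contextual [hzero]
  exact ⟨_, hpos', hzero', hte.exists_succ_of_principalMinor hpos' hzero' hminor⟩

lemma of_chain {m : ℕ} {S : Fin m → Finset ι} (hcard : ∀ k, (S k).card = k + 1) (hS : Monotone S)
    (hminor : ∀ k, 0 < (-1) ^ (S k).card * principalMinor P (S k)) (k : Fin m) :
    HasAlternatingScaling P (S k) := by
  cases m with
  | zero => exact k.elim0
  | succ m =>
    induction k using Fin.induction with
    | zero => exact (empty P).extend (Finset.empty_subset _) (by simp [hcard]) (hminor 0)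
    | succ k ih => exact ih.extend (hS k.castSucc_le_succ) (by simp [hcard]) (hminor k.succ)

lemma exists_charpoly_eq_prod (h : HasAlternatingScaling P Finset.univ) :
    ∃ d : ι → ℝ, (∀ i, 0 < d i) ∧ ∃ μ : Fin (Fintype.card ι) → ℝ,
      StrictMono μ ∧ (∀ i, μ i < 0) ∧ (diagonal d * P).charpoly = ∏ i, (X - C (μ i)) := by
  obtain ⟨d, hpos, -, t, ht⟩ := h
  obtain ⟨μ, hμ_mono, hμ_neg, hμ_root⟩ := ht.exists_strictMono_roots
  exact ⟨d, fun i ↦ hpos i (Finset.mem_univ i), μ, hμ_mono, hμ_neg,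
    eq_prod_X_sub_C_of_injective_roots (charpoly_monic _) (by simp) hμ_mono.injective hμ_root⟩

end HasAlternatingScaling

end Scaling

/-- **Fisher's theorem.** If a real `n × n` matrix `P` (`n ≥ 1`) has a nested
sequence of principal minors `M_1, …, M_n` (associated with a chain of index
sets `S 0 ⊂ S 1 ⊂ ⋯` with `|S k| = k + 1`) such that `(-1)^k * M_k > 0` for
every `k = 1, …, n`, then there exists a positive diagonal matrix `D` such that
all eigenvalues of `D * P` are real, negative and distinct. -/
theorem fisher_nested_minors {n : ℕ} (hn : 1 ≤ n) (P : Matrix (Fin n) (Fin n) ℝ)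
    (S : Fin n → Finset (Fin n))
    (hcard : ∀ k : Fin n, (S k).card = (k : ℕ) + 1)
    (hchain : ∀ k l : Fin n, k ≤ l → S k ⊆ S l)
    (hsign : ∀ k : Fin n,
      0 < (-1 : ℝ) ^ ((k : ℕ) + 1) *
        (P.submatrix (fun i : S k => (i : Fin n)) (fun i : S k => (i : Fin n))).det) :
    ∃ d : Fin n → ℝ, (∀ i, 0 < d i) ∧
      ∃ μ : Fin n → ℝ, Function.Injective μ ∧ (∀ i, μ i < 0) ∧
        (Matrix.diagonal d * P).charpoly = ∏ i, (X - C (μ i)) := by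
  obtain ⟨m, rfl⟩ := Nat.exists_eq_add_of_le' hn
  have hlast : S (Fin.last m) = Finset.univ := by
    rw [← Finset.card_eq_iff_eq_univ, hcard, Fin.val_last, Fintype.card_fin]
  have hscaling : HasAlternatingScaling P (S (Fin.last m)) :=
    .of_chain hcard hchain (fun k ↦ hcard k ▸ hsign k) _
  have hfactor := (hlast ▸ hscaling).exists_charpoly_eq_prod
  rw [Fintype.card_fin] at hfactor
  obtain ⟨d, hd, μ, hμ_mono, hμ_neg, hμ⟩ := hfactor
  exact ⟨d, hd, μ, hμ_mono.injective, hμ_neg, hμ⟩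
end

section
/- Let A be an n×n complex matrix all of whose principal minors (over all nonempty index subsets) are nonzero. Then for any prescribed multiset λ = {λ_1, …, λ_n} of n complex numbers there exists an n×n complex diagonal matrix D such that the spectrum of A·D (counted with algebraic multiplicity) is exactly {λ_1, …, λ_n}, i.e., the characteristic polynomial of A·D equals ∏_{i=1}^n (x − λ_i). -/
open Matrix Polynomial

/-!
Write `n` for the size of `A` and `p` for the prescribed characteristic polynomial. Asking that
`A * diagonal d` have characteristic polynomial `p.scaleRoots t` amounts to `n` polynomial
equations in the `n + 1` unknowns `t`, `d`, all of which hold at the origin. Over an algebraically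
closed field, Krull's height theorem and the Nullstellensatz provide a solution other than the
origin. If `t = 0`, then the characteristic polynomial of `A * diagonal d` is `X ^ n`; but its
coefficient of index `n - k`, where `k` is the size of the support `S` of `d`, is up to sign
`det A[S] * ∏ i ∈ S, d i`, so `S` is empty and the solution is the origin after all. Hence `t ≠ 0`,
and `t⁻¹ • d` is the required diagonal.
-/

section CommonZeros

variable {R σ : Type*} [CommRing R]

section Specialize

variable [DecidableEq σ]

/-- The endomorphism of the polynomial ring that assigns to the variables in `s` their values at
the point `x` and keeps the others. Its kernels, for growing `s`, are a chain of primes ending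
in the ideal of `x`. -/
noncomputable def specialize (x : σ → R) (s : Finset σ) :
    MvPolynomial σ R →ₐ[R] MvPolynomial σ R :=
  MvPolynomial.aeval (s.piecewise (fun i => MvPolynomial.C (x i)) MvPolynomial.X)

lemma specialize_X (x : σ → R) (s : Finset σ) (i : σ) :
    specialize x s (MvPolynomial.X i) =
      if i ∈ s then MvPolynomial.C (x i) else MvPolynomial.X i := by
  rw [specialize, MvPolynomial.aeval_X, Finset.piecewise]

lemma specialize_specialize_of_subset (x : σ → R) {s t : Finset σ} (hst : s ⊆ t)
    (p : MvPolynomial σ R) : specialize x t (specialize x s p) = specialize x t p := by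
  suffices (specialize x t).comp (specialize x s) = specialize x t from DFunLike.congr_fun this p
  ext1 i
  by_cases hi : i ∈ s
  · simp [specialize_X, hi, hst hi, MvPolynomial.algHom_C]
  · simp [specialize_X, hi]

lemma eval_specialize (x : σ → R) (s : Finset σ) (p : MvPolynomial σ R) :
    MvPolynomial.eval x (specialize x s p) = MvPolynomial.eval x p := by
  suffices (MvPolynomial.aeval x).comp (specialize x s) = MvPolynomial.aeval x from
    DFunLike.congr_fun this p
  ext1 i
  by_cases hi : i ∈ s <;> simp [specialize_X, hi]

lemma ker_specialize_lt_ker_specialize_insert [Nontrivial R] (x : σ → R) {s : Finset σ} {a : σ}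
    (ha : a ∉ s) :
    RingHom.ker (specialize x s) < RingHom.ker (specialize x (insert a s)) := by
  refine SetLike.lt_iff_le_and_exists.2
    ⟨fun p hp => ?_, MvPolynomial.X a - MvPolynomial.C (x a), ?_, fun h => ?_⟩
  · rw [RingHom.mem_ker] at hp ⊢
    rw [← specialize_specialize_of_subset x (Finset.subset_insert a s), hp, map_zero]
  · simp [RingHom.mem_ker, specialize_X, MvPolynomial.algHom_C]
  · rw [RingHom.mem_ker, map_sub, specialize_X, if_neg ha, MvPolynomial.algHom_C] at h
    simpa using congrArg (MvPolynomial.eval (Function.update x a (x a + 1))) h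

lemma card_le_height_ker_specialize [IsDomain R] (x : σ → R) (s : Finset σ) :
    s.card ≤ (RingHom.ker (specialize x s)).height := by
  induction s using Finset.induction_on with
  | empty => simp
  | insert a s ha ih =>
    have hs := RingHom.ker_isPrime (specialize x s)
    have has := RingHom.ker_isPrime (specialize x (insert a s))
    rw [Finset.card_insert_of_notMem ha, Nat.cast_add_one]
    exact (add_le_add_left ih 1).trans <|
      Ideal.height_add_one_le_of_lt_of_isPrime (ker_specialize_lt_ker_specialize_insert x ha)

end Specialize

lemma card_le_height_ker_eval [IsDomain R] [Fintype σ] (x : σ → R) :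
    Fintype.card σ ≤ (RingHom.ker (MvPolynomial.eval x)).height := by
  classical
  refine (card_le_height_ker_specialize x Finset.univ).trans (Ideal.height_mono fun p hp => ?_)
  rw [RingHom.mem_ker] at hp ⊢
  rw [← eval_specialize x Finset.univ, hp, map_zero]

theorem exists_ne_forall_eval_eq_zero {K τ : Type*} [Field K] [IsAlgClosed K]
    [Fintype σ] [Fintype τ] (hcard : Fintype.card τ < Fintype.card σ)
    (f : τ → MvPolynomial σ K) (x : σ → K) (hx : ∀ j, MvPolynomial.eval x (f j) = 0) :
    ∃ y ≠ x, ∀ j, MvPolynomial.eval y (f j) = 0 := by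
  by_contra! hunique
  let I : Ideal (MvPolynomial σ K) := Ideal.span (Set.range f)
  have hzeros : MvPolynomial.zeroLocus K I = {x} := by
    ext y
    simp only [I, MvPolynomial.zeroLocus_span, Set.forall_mem_range, Set.mem_ofPred_eq,
      MvPolynomial.aeval_eq_eval, Set.mem_singleton_iff]
    refine ⟨fun hy => ?_, fun hy => hy ▸ hx⟩
    by_contra hyx
    obtain ⟨j, hj⟩ := hunique y hyx
    exact hj (hy j)
  have hradical : I.radical = RingHom.ker (MvPolynomial.eval x) := by
    rw [← MvPolynomial.vanishingIdeal_zeroLocus_eq_radical (K := K), hzeros]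
    ext p
    rw [MvPolynomial.mem_vanishingIdeal_singleton_iff, RingHom.mem_ker,
      MvPolynomial.aeval_eq_eval]
  have hmin : RingHom.ker (MvPolynomial.eval x) ∈ I.minimalPrimes := by
    have hprime := RingHom.ker_isPrime (MvPolynomial.eval x)
    rw [← Ideal.radical_minimalPrimes, hradical, Ideal.minimalPrimes_eq_subsingleton_self]
    rfl
  have hle : (Fintype.card σ : ℕ∞) ≤ Fintype.card τ :=
    calc (Fintype.card σ : ℕ∞) ≤ (RingHom.ker (MvPolynomial.eval x)).height :=
          card_le_height_ker_eval x
      _ ≤ (Set.range f).ncard :=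
          Ideal.height_le_card_of_mem_minimalPrimes_span (Set.finite_range f) hmin
      _ ≤ Fintype.card τ := by
          rw [← Set.image_univ, ← Nat.card_eq_fintype_card, ← Set.ncard_univ]
          exact_mod_cast Set.ncard_image_le Set.finite_univ
  exact hcard.not_ge (Nat.cast_le.1 hle)

end CommonZeros

section Charpoly

lemma eq_of_isMonicOfDegree_of_coeff_eq {R : Type*} [Semiring R] {p q : R[X]} {n : ℕ}
    (hp : IsMonicOfDegree p n) (hq : IsMonicOfDegree q n)
    (h : ∀ k < n, p.coeff k = q.coeff k) : p = q := by
  ext k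
  rcases lt_or_ge k n with hk | hk
  · exact h k hk
  · exact hp.coeff_eq hq hk

variable {R ι : Type*} [CommRing R] [Fintype ι] [DecidableEq ι]

lemma charpoly_smul (c : R) (M : Matrix ι ι R) : (c • M).charpoly = M.charpoly.scaleRoots c := by
  nontriviality R
  ext i
  rw [coeff_scaleRoots, charpoly_natDegree_eq_dim]
  rcases le_or_gt i (Fintype.card ι) with hi | hi
  · obtain ⟨k, hk, rfl⟩ : ∃ k ≤ Fintype.card ι, i = Fintype.card ι - k :=
      ⟨Fintype.card ι - i, Nat.sub_le _ _, by omega⟩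
    rw [charpoly_coeff_eq_sum_minors _ k hk, charpoly_coeff_eq_sum_minors _ k hk,
      Nat.sub_sub_self hk, mul_assoc, Finset.sum_mul]
    congr 1
    refine Finset.sum_congr rfl fun s hs => ?_
    rw [submatrix_smul, Pi.smul_apply, Pi.smul_apply, det_smul, Fintype.card_coe,
      (Finset.mem_powersetCard.1 hs).2, mul_comm]
  · rw [coeff_eq_zero_of_natDegree_lt (by rwa [charpoly_natDegree_eq_dim]),
      coeff_eq_zero_of_natDegree_lt (by rwa [charpoly_natDegree_eq_dim]), zero_mul]

lemma isMonicOfDegree_charpoly [Nontrivial R] (M : Matrix ι ι R) :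
    IsMonicOfDegree M.charpoly (Fintype.card ι) :=
  ⟨M.charpoly_natDegree_eq_dim, M.charpoly_monic⟩

lemma det_submatrix_mul_diagonal (A : Matrix ι ι R) (d : ι → R) (S : Finset ι) :
    ((A * diagonal d).submatrix (fun i : S => (i : ι)) (fun i : S => (i : ι))).det =
      (A.submatrix (fun i : S => (i : ι)) (fun i : S => (i : ι))).det * ∏ i ∈ S, d i := by
  have hmul : (A * diagonal d).submatrix (fun i : S => (i : ι)) (fun i : S => (i : ι)) =
      A.submatrix (fun i : S => (i : ι)) (fun i : S => (i : ι)) *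
        diagonal (fun i : S => d i) := by
    ext i j
    simp only [submatrix_apply, mul_diagonal]
  rw [hmul, det_mul, det_diagonal, Finset.prod_coe_sort S d]

theorem eq_zero_of_charpoly_mul_diagonal_eq_X_pow [IsDomain R] {A : Matrix ι ι R}
    (hminors : ∀ S : Finset ι, S.Nonempty →
      (A.submatrix (fun i : S => (i : ι)) (fun i : S => (i : ι))).det ≠ 0)
    {d : ι → R} (hd : (A * diagonal d).charpoly = X ^ Fintype.card ι) : d = 0 := by
  classical
  by_contra hne
  let S : Finset ι := {i | d i ≠ 0}
  have hS : S.Nonempty := by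
    obtain ⟨i, hi⟩ := Function.ne_iff.1 hne
    exact ⟨i, by simpa [S] using hi⟩
  have hminor_eq_zero (T : Finset ι) (hT : T.card = S.card) (hTS : T ≠ S) :
      ((A * diagonal d).submatrix (fun i : T => (i : ι)) (fun i : T => (i : ι))).det = 0 := by
    obtain ⟨i, hiT, hiS⟩ := Finset.not_subset.1 fun h =>
      hTS (Finset.eq_of_subset_of_card_le h hT.ge)
    rw [det_submatrix_mul_diagonal, Finset.prod_eq_zero hiT (by simpa [S] using hiS), mul_zero]
  have hcoeff := charpoly_coeff_eq_sum_minors (A * diagonal d) S.card S.card_le_univ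
  rw [hd, coeff_X_pow, if_neg (by have := hS.card_pos; have := S.card_le_univ; omega),
    Finset.sum_eq_single S (fun T hT => hminor_eq_zero T (Finset.mem_powersetCard.1 hT).2)
      (fun h => absurd (Finset.mem_powersetCard.2 ⟨S.subset_univ, rfl⟩) h)] at hcoeff
  have hprod : ∏ i ∈ S, d i ≠ 0 := Finset.prod_ne_zero_iff.2 fun i hi => (Finset.mem_filter.1 hi).2
  rw [det_submatrix_mul_diagonal] at hcoeff
  exact mul_ne_zero (pow_ne_zero _ (neg_ne_zero.2 one_ne_zero)) (mul_ne_zero (hminors S hS) hprod)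
    hcoeff.symm

/-- The difference between the characteristic polynomial of `A * diagonal d` and
`p.scaleRoots t`, for indeterminate `t` (the variable `none`) and `d` (the variables `some i`). -/
noncomputable def genericCharpolySub (A : Matrix ι ι R) (p : R[X]) :
    (MvPolynomial (Option ι) R)[X] :=
  (A.map MvPolynomial.C * diagonal fun i => MvPolynomial.X (some i)).charpoly -
    (p.map MvPolynomial.C).scaleRoots (MvPolynomial.X none)

lemma map_eval_genericCharpolySub (A : Matrix ι ι R) {p : R[X]} (hp : p.Monic)
    (x : Option ι → R) :
    (genericCharpolySub A p).map (MvPolynomial.eval x) =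
      (A * diagonal fun i => x (some i)).charpoly - p.scaleRoots (x none) := by
  nontriviality R
  have hmatrix : (A.map MvPolynomial.C * diagonal fun i => MvPolynomial.X (some i)).map
      (MvPolynomial.eval x) = A * diagonal fun i => x (some i) := by
    ext i j
    simp only [map_apply, mul_diagonal, map_mul, MvPolynomial.eval_C, MvPolynomial.eval_X]
  have heval_C : (MvPolynomial.eval x).comp MvPolynomial.C = RingHom.id R := by
    ext
    simp only [RingHom.comp_apply, MvPolynomial.eval_C, RingHom.id_apply]
  have hscale : ((p.map MvPolynomial.C).scaleRoots (MvPolynomial.X none)).map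
      (MvPolynomial.eval x) = p.scaleRoots (x none) := by
    rw [map_scaleRoots _ _ _ (by simp [hp.map MvPolynomial.C]), MvPolynomial.eval_X,
      Polynomial.map_map, heval_C, Polynomial.map_id]
  rw [genericCharpolySub, Polynomial.map_sub, ← charpoly_map, hmatrix, hscale]

end Charpoly

section InverseEigenvalue

variable {K ι : Type*} [Field K] [Fintype ι] [DecidableEq ι]

theorem exists_ne_zero_charpoly_mul_diagonal_eq_scaleRoots [IsAlgClosed K] (A : Matrix ι ι K)
    {p : K[X]} (hp : IsMonicOfDegree p (Fintype.card ι)) :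
    ∃ (t : K) (d : ι → K), (t ≠ 0 ∨ d ≠ 0) ∧ (A * diagonal d).charpoly = p.scaleRoots t := by
  have heval (x : Option ι → K) (k : ℕ) :
      MvPolynomial.eval x ((genericCharpolySub A p).coeff k) =
        (A * diagonal fun i => x (some i)).charpoly.coeff k - (p.scaleRoots (x none)).coeff k := by
    rw [← coeff_map, map_eval_genericCharpolySub A hp.monic, coeff_sub]
  have horigin (k : ℕ) : MvPolynomial.eval 0 ((genericCharpolySub A p).coeff k) = 0 := by
    rw [heval]
    simp [hp.leadingCoeff_eq, hp.natDegree_eq]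
  obtain ⟨x, hx, hzero⟩ := exists_ne_forall_eval_eq_zero (by simp)
    (fun k : Fin (Fintype.card ι) => (genericCharpolySub A p).coeff k) 0 (fun k => horigin k)
  refine ⟨x none, fun i => x (some i), ?_, ?_⟩
  · by_contra! h
    exact hx (funext (Option.rec h.1 (congrFun h.2)))
  · refine eq_of_isMonicOfDegree_of_coeff_eq (isMonicOfDegree_charpoly _)
      ⟨(natDegree_scaleRoots p _).trans hp.natDegree_eq, (monic_scaleRoots_iff _).2 hp.monic⟩
      fun k hk => ?_
    exact sub_eq_zero.1 ((heval x k).symm.trans (hzero ⟨k, hk⟩))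

theorem friedland_inverse_eigenvalue_general [IsAlgClosed K] (A : Matrix ι ι K)
    (hminors : ∀ S : Finset ι, S.Nonempty →
      (A.submatrix (fun i : S => (i : ι)) (fun i : S => (i : ι))).det ≠ 0)
    {p : K[X]} (hp : IsMonicOfDegree p (Fintype.card ι)) :
    ∃ d : ι → K, (A * diagonal d).charpoly = p := by
  obtain ⟨t, d, hne, hcharpoly⟩ := exists_ne_zero_charpoly_mul_diagonal_eq_scaleRoots A hp
  have ht : t ≠ 0 := by
    rintro rfl
    refine hne.elim (absurd rfl) fun hd => hd ?_
    refine eq_zero_of_charpoly_mul_diagonal_eq_X_pow hminors ?_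
    rw [hcharpoly, scaleRoots_zero, hp.leadingCoeff_eq, hp.natDegree_eq, one_smul]
  refine ⟨t⁻¹ • d, ?_⟩
  rw [diagonal_smul, Matrix.mul_smul, charpoly_smul, hcharpoly, ← scaleRoots_mul,
    mul_inv_cancel₀ ht, scaleRoots_one]

end InverseEigenvalue

/-- **Friedland's inverse eigenvalue theorem (existence part).** Let `A` be an
`n × n` complex matrix all of whose principal minors (over all nonempty index
subsets) are nonzero. Then for any prescribed family `λ_1, …, λ_n` of complex
numbers there exists a complex diagonal matrix `D` such that the spectrum of
`A * D`, counted with algebraic multiplicity, is exactly `{λ_1, …, λ_n}`, i.e.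
the characteristic polynomial of `A * D` equals `∏ i, (X - λ i)`. -/
theorem friedland_inverse_eigenvalue {n : ℕ} (A : Matrix (Fin n) (Fin n) ℂ)
    (hminors : ∀ S : Finset (Fin n), S.Nonempty →
      (A.submatrix (fun i : S => (i : Fin n)) (fun i : S => (i : Fin n))).det ≠ 0)
    (lam : Fin n → ℂ) :
    ∃ d : Fin n → ℂ,
      (A * Matrix.diagonal d).charpoly = ∏ i, (X - C (lam i)) :=
  friedland_inverse_eigenvalue_general A hminors
    ⟨by simp [natDegree_finsetProd_X_sub_C_eq_card], monic_prod_X_sub_C lam Finset.univ⟩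
end

section
/- Let G be an m×m real matrix and let G_D denote the diagonal matrix whose diagonal entries are the diagonal entries of G. There exists a real diagonal matrix D such that G·D is Hurwitz together with all of its principal submatrices (i.e., for every proper subset f of {1,…,m}, the principal submatrix (G·D)(f) obtained by deleting the rows and columns indexed by f is Hurwitz) if and only if det(G(f))·det(G_D(f)) > 0 for every proper subset f of {1,…,m}, where M(f) denotes the principal submatrix of M obtained by deleting the rows and columns with indices in f. -/
open Matrix

/-- A real square matrix is Hurwitz if all its (complex) eigenvalues have
strictly negative real part. -/
def IsHurwitz {n : Type*} [Fintype n] [DecidableEq n] (M : Matrix n n ℝ) : Prop :=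
  ∀ μ ∈ spectrum ℂ (M.map (Complex.ofReal)), μ.re < 0

/-- The principal submatrix of `M` obtained by deleting the rows and columns
with indices in `f`. -/
def delSubmatrix {m : ℕ} (M : Matrix (Fin m) (Fin m) ℝ) (f : Finset (Fin m)) :
    Matrix {i : Fin m // i ∉ f} {i : Fin m // i ∉ f} ℝ :=
  M.submatrix Subtype.val Subtype.val


/-!
The determinantal condition says that every principal minor of `G * G_D` is positive, i.e. that
`G * G_D` is a P-matrix. If `G * D` and its principal submatrices are Hurwitz, then `-(G * D)` is
a P-matrix, so its diagonal is positive and `G * G_D` is obtained from it by a positive scaling of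
the columns.

Conversely, as in the Fisher–Fuller theorem, the columns of `M = -(G * G_D)` can be scaled one
after the other. Multiplying column `a` of a principal submatrix `N` of `M` by `ε` gives the
characteristic polynomial `X * r + ε * q`, where `r` is the characteristic polynomial of `N` with
row and column `a` deleted and `q = N.charpoly - X * r` has degree at most that of `r`. Hence no
root escapes to infinity as `ε → 0⁺`, and the roots stay near those of `X * r`. The only one of
these not already in the open left half-plane is `0`, which moves by about `-ε * q(0) / r(0)`, and
`q(0) / r(0)` is a quotient of principal minors of the P-matrix `-M`, up to the positive factors
already chosen.
-/

open Polynomial Topology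

section Polynomial

theorem exists_norm_eval_div_le_of_isClosed {𝕜 : Type*} [NormedField 𝕜] [ProperSpace 𝕜]
    {q r : 𝕜[X]} (hdeg : q.degree ≤ r.degree) {K : Set 𝕜} (hK : IsClosed K)
    (hr : ∀ z ∈ K, r.eval z ≠ 0) : ∃ C, ∀ z ∈ K, ‖q.eval z / r.eval z‖ ≤ C := by
  obtain ⟨c, hc⟩ := (isBigO_cobounded_of_degree_le hdeg).bound
  set B : Set 𝕜 := {z | ‖q.eval z‖ ≤ c * ‖r.eval z‖}ᶜ
  have hB : Bornology.IsBounded B := Bornology.isBounded_def.2 (by rwa [compl_compl])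
  obtain ⟨C, hC⟩ := (hB.isCompact_closure.inter_right hK).exists_bound_of_continuousOn
    (q.continuous.continuousOn.div r.continuous.continuousOn fun z hz ↦ hr z hz.2)
  refine ⟨max C c, fun z hz ↦ ?_⟩
  by_cases hzB : z ∈ B
  · exact (hC z ⟨subset_closure hzB, hz⟩).trans (le_max_left _ _)
  · rw [norm_div, div_le_iff₀ (norm_pos_iff.2 (hr z hz))]
    exact (not_not.1 hzB).trans (by gcongr; exact le_max_right _ _)

theorem eval_pos_of_monic_of_forall_ge_ne_zero {p : ℝ[X]} (hp : p.Monic) {a : ℝ}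
    (h : ∀ t, a ≤ t → p.eval t ≠ 0) : 0 < p.eval a := by
  by_cases hdeg : p.degree ≤ 0
  · simp [hp.degree_le_zero_iff_eq_one.1 hdeg]
  · by_contra! hneg
    have hlim := p.tendsto_atTop_of_leadingCoeff_nonneg (not_le.1 hdeg) (by simp [hp.leadingCoeff])
    obtain ⟨T, hT, haT⟩ :=
      ((hlim.eventually_ge_atTop 0).and (Filter.eventually_ge_atTop a)).exists
    obtain ⟨t, ht, hroot⟩ :=
      intermediate_value_Icc haT p.continuous.continuousOn ⟨hneg, hT⟩
    exact h t ht.1 hroot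

/-- A complex polynomial is Hurwitz if all its roots lie in the open left half-plane; a real
matrix is Hurwitz when its characteristic polynomial is. -/
def IsHurwitzPoly (p : ℂ[X]) : Prop :=
  ∀ z, p.IsRoot z → z.re < 0

theorem IsHurwitzPoly.eventually_X_mul_add {q r : ℂ[X]} (hr : IsHurwitzPoly r)
    (hdeg : q.degree ≤ r.degree) (h0 : 0 < (q.eval 0 / r.eval 0).re) :
    ∀ᶠ ε : ℝ in 𝓝[>] 0, IsHurwitzPoly (X * r + C (ε : ℂ) * q) := by
  have hne : ∀ z : ℂ, 0 ≤ z.re → r.eval z ≠ 0 := fun z hz h ↦ (hr z h).not_ge hz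
  obtain ⟨B, hB⟩ := exists_norm_eval_div_le_of_isClosed hdeg
    (isClosed_le continuous_const Complex.continuous_re) hne
  have hcont : ContinuousAt (fun z ↦ (q.eval z / r.eval z).re) 0 :=
    Complex.continuous_re.continuousAt.comp
      (q.continuous.continuousAt.div r.continuous.continuousAt (hne 0 le_rfl))
  obtain ⟨δ, hδ, hball⟩ := Metric.eventually_nhds_iff.1 (hcont.eventually (lt_mem_nhds h0))
  have hsmall : ∀ᶠ ε : ℝ in 𝓝[>] 0, ε * B < δ :=
    nhdsWithin_le_nhds
      (((continuous_mul_const B).tendsto' 0 0 (zero_mul B)).eventually_lt_const hδ)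
  filter_upwards [hsmall, self_mem_nhdsWithin] with ε hεB hε z hz
  by_contra! hzre
  have hzeq : z = -((ε : ℂ) * (q.eval z / r.eval z)) := by
    have hroot : z * r.eval z + ε * q.eval z = 0 := by simpa using hz
    have := hne z hzre
    field_simp
    linear_combination hroot
  have hzδ : ‖z‖ < δ := calc
    ‖z‖ = ε * ‖q.eval z / r.eval z‖ := by
      conv_lhs => rw [hzeq]
      rw [norm_neg, norm_mul, Complex.norm_of_nonneg (le_of_lt hε)]
    _ ≤ ε * B := mul_le_mul_of_nonneg_left (hB z hzre) (le_of_lt hε)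
    _ < δ := hεB
  have hre : z.re = -(ε * (q.eval z / r.eval z).re) := by
    conv_lhs => rw [hzeq]
    rw [Complex.neg_re, Complex.re_ofReal_mul]
  have := mul_pos hε (hball (y := z) (by simpa using hzδ))
  linarith

end Polynomial

section Matrix

variable {R k l m n : Type*} [Fintype n] [DecidableEq n] [Fintype k] [DecidableEq k]

theorem submatrix_mul_diagonal_right [NonUnitalNonAssocSemiring R] (M : Matrix l n R) (d : n → R)
    (e : m → l) (g : k → n) :
    (M * diagonal d).submatrix e g = M.submatrix e g * diagonal (d ∘ g) := by
  ext i j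
  simp

theorem submatrix_mul_diagonal_update_one [NonAssocSemiring R] (M : Matrix l n R) (e : m → l)
    {s : Finset n} {a : n} (ha : a ∉ s) (ε : R) :
    (M * diagonal (Function.update 1 a ε)).submatrix e ((↑) : s → n) = M.submatrix e (↑) := by
  ext i j
  have hj : (j : n) ≠ a := fun h ↦ ha (h ▸ j.2)
  simp [hj]

theorem det_updateCol_none_single [CommRing R] (M : Matrix (Option k) (Option k) R) :
    (M.updateCol none (Pi.single none 1)).det = (M.submatrix some some).det := by
  have hblocks : (M.updateCol none (Pi.single none 1)).submatrix
      (Equiv.optionEquivSumPUnit.{0} k).symm (Equiv.optionEquivSumPUnit.{0} k).symm =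
      fromBlocks (M.submatrix some some) 0 (M.submatrix (fun _ ↦ none) some) 1 := by
    ext (i | i) (j | j) <;> simp
  rw [← det_submatrix_equiv_self (Equiv.optionEquivSumPUnit.{0} k).symm, hblocks,
    det_fromBlocks_zero₁₂, det_one, mul_one]

theorem charpoly_eval_zero [CommRing R] (M : Matrix n n R) : M.charpoly.eval 0 = (-M).det := by
  simp [eval_charpoly]

theorem charpoly_mul_diagonal_update_none [CommRing R] (M : Matrix (Option k) (Option k) R)
    (ε : R) :
    (M * diagonal (Function.update 1 none ε)).charpoly =
      X * (M.submatrix some some).charpoly +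
        C ε * (M.charpoly - X * (M.submatrix some some).charpoly) := by
  have hcol : charmatrix (M * diagonal (Function.update 1 none ε)) =
      (charmatrix M).updateCol none
        (((1 - C ε) * X) • Pi.single none 1 + C ε • fun i ↦ charmatrix M i none) := by
    ext1 i j
    cases i <;> cases j <;> simp [charmatrix_apply, diagonal_apply] <;> ring
  have hsub : (charmatrix M).submatrix some some = charmatrix (M.submatrix some some) := by
    ext1 i j
    simp [charmatrix_apply, diagonal_apply]
  rw [charpoly, hcol, det_updateCol_add, det_updateCol_smul, det_updateCol_smul,
    det_updateCol_none_single, hsub, updateCol_eq_self, ← charpoly, ← charpoly]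
  ring

theorem degree_charpoly_sub_X_mul_charpoly_le [CommRing R] [Nontrivial R]
    (M : Matrix (Option k) (Option k) R) :
    (M.charpoly - X * (M.submatrix some some).charpoly).degree ≤
      (M.submatrix some some).charpoly.degree := by
  set r := (M.submatrix some some).charpoly
  have hdeg : M.charpoly.degree = (X * r).degree := by
    rw [monic_X.degree_mul_comm, degree_mul_X]
    simp [r, charpoly_degree_eq_dim]
  have hlt := degree_sub_lt_left hdeg M.charpoly_monic.ne_zero
    (by rw [M.charpoly_monic, monic_X.mul (charpoly_monic _)])
  rw [hdeg, monic_X.degree_mul_comm, degree_mul_X] at hlt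
  exact WithBot.le_of_add_le_add_right WithBot.one_ne_bot (Nat.WithBot.add_one_le_of_lt hlt)

end Matrix

section Hurwitz

variable {k n : Type*} [Fintype n] [DecidableEq n] [Fintype k] [DecidableEq k]

theorem isHurwitz_iff_isHurwitzPoly_charpoly {M : Matrix n n ℝ} :
    IsHurwitz M ↔ IsHurwitzPoly (M.charpoly.map Complex.ofRealHom) := by
  simp only [IsHurwitz, IsHurwitzPoly, mem_spectrum_iff_isRoot_charpoly, ← charpoly_map]
  rfl

theorem IsHurwitz.of_isEmpty [IsEmpty n] (M : Matrix n n ℝ) : IsHurwitz M := by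
  intro z hz
  simp at hz

theorem isHurwitz_submatrix_equiv {M : Matrix n n ℝ} (e : k ≃ n) :
    IsHurwitz (M.submatrix e e) ↔ IsHurwitz M := by
  rw [isHurwitz_iff_isHurwitzPoly_charpoly, isHurwitz_iff_isHurwitzPoly_charpoly,
    ← charpoly_reindex e.symm M]
  rfl

theorem IsHurwitz.det_neg_pos {M : Matrix n n ℝ} (hM : IsHurwitz M) : 0 < (-M).det := by
  rw [← charpoly_eval_zero]
  refine eval_pos_of_monic_of_forall_ge_ne_zero M.charpoly_monic fun t ht hroot ↦ ?_
  have hre : (t : ℂ).re < 0 := isHurwitz_iff_isHurwitzPoly_charpoly.1 hM t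
    (IsRoot.map (f := Complex.ofRealHom) hroot)
  exact ht.not_gt hre

theorem IsHurwitz.eventually_mul_diagonal_update_none {M : Matrix (Option k) (Option k) ℝ}
    (hsub : IsHurwitz (M.submatrix some some)) (hdet : 0 < (-M).det) :
    ∀ᶠ ε : ℝ in 𝓝[>] 0, IsHurwitz (M * diagonal (Function.update 1 none ε)) := by
  set r := (M.submatrix some some).charpoly with hr
  set q := M.charpoly - X * r with hq
  have hquot : 0 < ((q.map Complex.ofRealHom).eval 0 / (r.map Complex.ofRealHom).eval 0).re := by
    rw [← map_zero Complex.ofRealHom, eval_map_apply, eval_map_apply, ← map_div₀]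
    have hq0 : q.eval 0 = (-M).det := by simp [hq, charpoly_eval_zero]
    rw [hq0, hr, charpoly_eval_zero]
    exact div_pos hdet hsub.det_neg_pos
  filter_upwards [(isHurwitz_iff_isHurwitzPoly_charpoly.1 hsub).eventually_X_mul_add
    (by simpa only [degree_map] using degree_charpoly_sub_X_mul_charpoly_le M) hquot] with ε hε
  rw [isHurwitz_iff_isHurwitzPoly_charpoly, charpoly_mul_diagonal_update_none]
  rwa [Polynomial.map_add, Polynomial.map_mul, Polynomial.map_mul, map_X, map_C]

end Hurwitz

section PMatrix

variable {R n : Type*} [DecidableEq n]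

/-- A P-matrix: a square matrix all of whose principal minors, indexed here by the retained rows
and columns, are positive. -/
def IsPMatrix [CommRing R] [PartialOrder R] (M : Matrix n n R) : Prop :=
  ∀ s : Finset n, 0 < (M.submatrix ((↑) : s → n) (↑)).det

theorem IsPMatrix.diag_pos [CommRing R] [PartialOrder R] {M : Matrix n n R} (hM : IsPMatrix M)
    (i : n) : 0 < M i i := by
  simpa [det_unique] using hM {i}

theorem IsPMatrix.mul_diagonal [Fintype n] [CommRing R] [PartialOrder R] [IsStrictOrderedRing R]
    {M : Matrix n n R} (hM : IsPMatrix M) {c : n → R} (hc : ∀ i, 0 < c i) :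
    IsPMatrix (M * diagonal c) := by
  intro s
  rw [submatrix_mul_diagonal_right, det_mul, det_diagonal]
  exact mul_pos (hM s) (Finset.prod_pos fun i _ ↦ hc i)

/-- A real matrix that is Hurwitz together with all its principal submatrices, indexed here by the
retained rows and columns; the empty submatrix is vacuously Hurwitz. -/
def IsTotallyHurwitz (M : Matrix n n ℝ) : Prop :=
  ∀ s : Finset n, IsHurwitz (M.submatrix ((↑) : s → n) (↑))

theorem IsTotallyHurwitz.isPMatrix_neg {M : Matrix n n ℝ} (hM : IsTotallyHurwitz M) :
    IsPMatrix (-M) :=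
  fun s ↦ (hM s).det_neg_pos

variable [Fintype n]

theorem IsPMatrix.eventually_isHurwitz_submatrix_insert {M : Matrix n n ℝ} (hM : IsPMatrix (-M))
    {s : Finset n} {a : n} (ha : a ∉ s) (hs : IsHurwitz (M.submatrix ((↑) : s → n) (↑))) :
    ∀ᶠ ε : ℝ in 𝓝[>] 0, IsHurwitz ((M * diagonal (Function.update 1 a ε)).submatrix
      ((↑) : ↥(insert a s) → n) (↑)) := by
  set e := (Finset.subtypeInsertEquivOption ha).symm
  set N := (M.submatrix ((↑) : ↥(insert a s) → n) (↑)).submatrix e e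
  have hdet : 0 < (-N).det :=
    (hM (insert a s)).trans_eq (det_submatrix_equiv_self e _).symm
  have hsub : IsHurwitz (N.submatrix some some) := hs
  filter_upwards [hsub.eventually_mul_diagonal_update_none hdet] with ε hε
  rw [← isHurwitz_submatrix_equiv e, submatrix_mul_diagonal_right, submatrix_mul_diagonal_right]
  convert! hε using 3
  ext (_ | i)
  · simp [e, Finset.subtypeInsertEquivOption]
  · have hi : (i : n) ≠ a := fun h ↦ ha (h ▸ i.2)
    simp [e, Finset.subtypeInsertEquivOption, hi]

theorem IsPMatrix.eventually_forall_subset_insert_isHurwitz {M : Matrix n n ℝ}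
    (hM : IsPMatrix (-M)) {S : Finset n} {a : n} (ha : a ∉ S)
    (hS : ∀ s ⊆ S, IsHurwitz (M.submatrix ((↑) : s → n) (↑))) :
    ∀ᶠ ε : ℝ in 𝓝[>] 0, ∀ s ⊆ insert a S,
      IsHurwitz ((M * diagonal (Function.update 1 a ε)).submatrix ((↑) : s → n) (↑)) := by
  have hinsert := (Filter.eventually_all_finset S.powerset).2 fun s hs ↦
    have hsS := Finset.mem_powerset.1 hs
    hM.eventually_isHurwitz_submatrix_insert (fun h ↦ ha (hsS h)) (hS s hsS)
  filter_upwards [hinsert] with ε hε s hs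
  by_cases has : a ∈ s
  · rw [← Finset.insert_erase has]
    exact hε _ (Finset.mem_powerset.2 (Finset.subset_insert_iff.1 hs))
  · rw [submatrix_mul_diagonal_update_one M _ has]
    exact hS s ((Finset.subset_insert_iff_of_notMem has).1 hs)

theorem IsPMatrix.exists_isTotallyHurwitz {M : Matrix n n ℝ} (hM : IsPMatrix (-M)) :
    ∃ c : n → ℝ, (∀ i, 0 < c i) ∧ IsTotallyHurwitz (M * diagonal c) := by
  suffices h : ∀ S : Finset n, ∃ c : n → ℝ, (∀ i, 0 < c i) ∧
      ∀ s ⊆ S, IsHurwitz ((M * diagonal c).submatrix ((↑) : s → n) (↑)) by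
    obtain ⟨c, hc, hH⟩ := h Finset.univ
    exact ⟨c, hc, fun s ↦ hH s s.subset_univ⟩
  intro S
  induction S using Finset.induction_on with
  | empty =>
    refine ⟨1, fun _ ↦ one_pos, fun s hs ↦ ?_⟩
    obtain rfl := Finset.subset_empty.1 hs
    exact .of_isEmpty _
  | insert a S ha ih =>
    obtain ⟨c, hc, hH⟩ := ih
    have hP : IsPMatrix (-(M * diagonal c)) := neg_mul M _ ▸ hM.mul_diagonal hc
    obtain ⟨ε, hε, hεpos⟩ := ((hP.eventually_forall_subset_insert_isHurwitz ha hH).and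
      self_mem_nhdsWithin).exists
    refine ⟨c * Function.update (1 : n → ℝ) a ε, fun i ↦ mul_pos (hc i) ?_, ?_⟩
    · obtain rfl | hi := eq_or_ne i a
      · simpa using hεpos
      · simp [hi]
    · rwa [mul_assoc, diagonal_mul_diagonal'] at hε

theorem locatelli_schiavoni_general (G : Matrix n n ℝ) :
    (∃ d : n → ℝ, IsTotallyHurwitz (G * diagonal d)) ↔ IsPMatrix (G * diagonal G.diag) := by
  constructor
  · rintro ⟨d, hd⟩
    have hP := hd.isPMatrix_neg
    have hpos : ∀ i, 0 < -(G i i * d i) := fun i ↦ by simpa using hP.diag_pos i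
    have hdne : ∀ i, d i ≠ 0 := fun i h ↦ by simpa [h] using hpos i
    have hscale : ∀ i, 0 < -(G i i / d i) := fun i ↦ by
      have := div_pos (hpos i) (mul_self_pos.2 (hdne i))
      rwa [neg_div, mul_div_mul_right _ _ (hdne i)] at this
    convert hP.mul_diagonal hscale using 1
    rw [neg_mul, mul_assoc, diagonal_mul_diagonal, ← mul_neg, diagonal_neg]
    congr 2
    ext i
    simp [mul_div_cancel₀ _ (hdne i)]
  · intro hG
    obtain ⟨c, -, hc⟩ := IsPMatrix.exists_isTotallyHurwitz (M := -(G * diagonal G.diag))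
      (by rwa [neg_neg])
    refine ⟨fun i ↦ -(G i i * c i), ?_⟩
    convert hc using 1
    rw [neg_mul, mul_assoc, diagonal_mul_diagonal, ← mul_neg, diagonal_neg]
    rfl

end PMatrix

section delSubmatrix

theorem forall_finset_iff_forall_ne_univ_compl {n : Type*} [Fintype n] [DecidableEq n]
    {p : Finset n → Prop} (h : p ∅) : (∀ s, p s) ↔ ∀ f, f ≠ Finset.univ → p fᶜ := by
  refine ⟨fun hp f _ ↦ hp fᶜ, fun hp s ↦ ?_⟩
  obtain rfl | hs := s.eq_empty_or_nonempty
  · exact h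
  · simpa using hp sᶜ ((Finset.compl_ne_univ_iff_nonempty s).2 hs)

variable {m : ℕ} (M : Matrix (Fin m) (Fin m) ℝ)

theorem isHurwitz_delSubmatrix (f : Finset (Fin m)) :
    IsHurwitz (delSubmatrix M f) ↔ IsHurwitz (M.submatrix ((↑) : ↥fᶜ → Fin m) (↑)) :=
  (isHurwitz_submatrix_equiv (Equiv.subtypeEquivRight fun _ ↦ Finset.mem_compl)).symm

theorem det_delSubmatrix_mul_det_delSubmatrix_diagonal (d : Fin m → ℝ) (f : Finset (Fin m)) :
    (delSubmatrix M f).det * (delSubmatrix (diagonal d) f).det =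
      ((M * diagonal d).submatrix ((↑) : ↥fᶜ → Fin m) (↑)).det := by
  have hdel : delSubmatrix (diagonal d) f = diagonal (d ∘ (↑)) :=
    submatrix_diagonal d _ Subtype.val_injective
  rw [hdel, delSubmatrix, ← det_mul, ← submatrix_mul_diagonal_right]
  exact (det_submatrix_equiv_self (Equiv.subtypeEquivRight fun _ ↦ Finset.mem_compl) _).symm

theorem isTotallyHurwitz_iff_forall_delSubmatrix :
    IsTotallyHurwitz M ↔
      ∀ f : Finset (Fin m), f ≠ Finset.univ → IsHurwitz (delSubmatrix M f) := by
  simp only [isHurwitz_delSubmatrix]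
  exact forall_finset_iff_forall_ne_univ_compl (.of_isEmpty _)

theorem isPMatrix_mul_diagonal_iff_forall_delSubmatrix (d : Fin m → ℝ) :
    IsPMatrix (M * diagonal d) ↔ ∀ f : Finset (Fin m), f ≠ Finset.univ →
      0 < (delSubmatrix M f).det * (delSubmatrix (diagonal d) f).det := by
  simp only [det_delSubmatrix_mul_det_delSubmatrix_diagonal]
  exact forall_finset_iff_forall_ne_univ_compl (one_pos.trans_eq det_isEmpty.symm)

end delSubmatrix

/-- **Locatelli–Schiavoni.** Given a real `m × m` matrix `G`, there exists a
real diagonal matrix `D` such that `G * D` is Hurwitz together with all of its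
principal submatrices if and only if `det (G(f)) * det (G_D(f)) > 0` for every
proper subset `f` of the index set, where `M(f)` denotes the principal
submatrix of `M` obtained by deleting rows and columns indexed by `f` and
`G_D` is the diagonal part of `G`. -/
theorem locatelli_schiavoni {m : ℕ} (G : Matrix (Fin m) (Fin m) ℝ) :
    (∃ d : Fin m → ℝ, ∀ f : Finset (Fin m), f ≠ Finset.univ →
        IsHurwitz (delSubmatrix (G * Matrix.diagonal d) f)) ↔
    (∀ f : Finset (Fin m), f ≠ Finset.univ →
        0 < (delSubmatrix G f).det *
          (delSubmatrix (Matrix.diagonal (fun i => G i i)) f).det) := by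
  simp only [← isTotallyHurwitz_iff_forall_delSubmatrix,
    ← isPMatrix_mul_diagonal_iff_forall_delSubmatrix]
  exact locatelli_schiavoni_general G
end

section
/- Let A be a Metzler matrix (all off-diagonal entries nonnegative) partitioned in blocks of compatible dimensions as A = [A₁₁, A₁₂; A₂₁, A₂₂] with A₁₁ and A₂₂ square. Then the following are equivalent: (i) A is Hurwitz; (ii) A₁₁ is an invertible Hurwitz Metzler matrix and its Schur complement A/A₁₁ := A₂₂ − A₂₁·A₁₁⁻¹·A₁₂ is a Hurwitz Metzler matrix; (iii) A₂₂ is an invertible Hurwitz Metzler matrix and its Schur complement A/A₂₂ := A₁₁ − A₁₂·A₂₂⁻¹·A₂₁ is a Hurwitz Metzler matrix. -/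
open Matrix

/-- A real square matrix is Metzler if all its off-diagonal entries are
nonnegative. -/
def IsMetzler {n : Type*} [DecidableEq n] (M : Matrix n n ℝ) : Prop :=
  ∀ i j, i ≠ j → 0 ≤ M i j

/-!
For a Metzler matrix `M`, three properties coincide: `M` is Hurwitz, some `v ≫ 0` satisfies
`M v ≪ 0`, and `M` is invertible with `M⁻¹ ≤ 0` entrywise. The vector `v` makes `M - μ` strictly
diagonally dominant, after rescaling its columns by `v`, whenever `0 ≤ re μ`. Conversely, if `M` is
Hurwitz, then `x t = -(M - t)⁻¹ 1` is defined and continuous for all `t ≥ 0`; it is nonnegative for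
large `t`, and wherever it is nonnegative it is strictly positive, so by connectedness it is
positive at `t = 0`.

The second property passes to principal submatrices, and the third turns the theorem into a reading
of signs in the block inverse formula: with `S = D - C A⁻¹ B`,
`-M⁻¹ = [N + N B T C N, N B T; T C N, T]` where `N = -A⁻¹` and `T = -S⁻¹`.
-/

variable {l m n R : Type*}

lemma mul_apply_nonneg [Fintype m] [Semiring R] [PartialOrder R] [IsOrderedRing R]
    {P : Matrix l m R} {Q : Matrix m n R} (hP : ∀ i j, 0 ≤ P i j) (hQ : ∀ i j, 0 ≤ Q i j)
    (i : l) (j : n) : 0 ≤ (P * Q) i j :=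
  Finset.sum_nonneg fun k _ => mul_nonneg (hP i k) (hQ k j)

section BlockInverse

variable [Fintype m] [DecidableEq m] [Fintype n] [DecidableEq n] [CommRing R]
  {A : Matrix m m R} {B : Matrix m n R} {C : Matrix n m R} {D : Matrix n n R}

lemma isUnit_det_fromBlocks_iff (hA : IsUnit A.det) :
    IsUnit (fromBlocks A B C D).det ↔ IsUnit (D - C * A⁻¹ * B).det := by
  let := A.invertibleOfIsUnitDet hA
  rw [det_fromBlocks₁₁, invOf_eq_nonsing_inv, IsUnit.mul_iff, and_iff_right hA]

lemma inv_fromBlocks_of_isUnit_det (hA : IsUnit A.det) (hS : IsUnit (D - C * A⁻¹ * B).det) :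
    (fromBlocks A B C D)⁻¹ =
      fromBlocks (A⁻¹ + A⁻¹ * B * (D - C * A⁻¹ * B)⁻¹ * C * A⁻¹)
        (-(A⁻¹ * B * (D - C * A⁻¹ * B)⁻¹))
        (-((D - C * A⁻¹ * B)⁻¹ * C * A⁻¹)) (D - C * A⁻¹ * B)⁻¹ := by
  let := A.invertibleOfIsUnitDet hA
  rw [← invOf_eq_nonsing_inv A] at hS ⊢
  let := invertibleOfIsUnitDet _ hS
  let := fromBlocks₁₁Invertible A B C D
  simpa only [← invOf_eq_nonsing_inv] using invOf_fromBlocks₁₁_eq A B C D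

end BlockInverse

lemma IsHurwitz.isUnit_det_sub_smul_one [Fintype n] [DecidableEq n] {M : Matrix n n ℝ}
    (hM : IsHurwitz M) {t : ℝ} (ht : 0 ≤ t) : IsUnit (M - t • (1 : Matrix n n ℝ)).det := by
  have hres : IsUnit (algebraMap ℂ (Matrix n n ℂ) t - M.map Complex.ofReal) :=
    spectrum.notMem_iff.mp fun hmem => ht.not_gt (hM _ hmem)
  have hmap : M.map Complex.ofReal - algebraMap ℂ (Matrix n n ℂ) t =
      Complex.ofRealHom.mapMatrix (M - t • (1 : Matrix n n ℝ)) := by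
    ext i j
    obtain rfl | hij := eq_or_ne i j <;> simp [algebraMap_matrix_apply, *]
  rw [← IsUnit.neg_iff, neg_sub, hmap, isUnit_iff_isUnit_det, ← RingHom.map_det] at hres
  exact (isUnit_map_iff Complex.ofRealHom _).mp hres

lemma IsHurwitz.isUnit_det [Fintype n] [DecidableEq n] {M : Matrix n n ℝ} (hM : IsHurwitz M) :
    IsUnit M.det := by
  simpa using hM.isUnit_det_sub_smul_one le_rfl

/-- `M` has a *Lyapunov vector*: some `v ≫ 0` satisfies `M v ≪ 0`. For a Metzler matrix `M` this
says that the weighted sup norm `max |x i| / v i` is a strict Lyapunov function of `ẋ = M x`. -/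
def HasLyapunovVector [Fintype n] (M : Matrix n n ℝ) : Prop :=
  ∃ v : n → ℝ, (∀ i, 0 < v i) ∧ ∀ i, (M *ᵥ v) i < 0

lemma exists_hasLyapunovVector_sub_smul_one [Fintype n] [DecidableEq n] (M : Matrix n n ℝ) :
    ∃ t : ℝ, 0 ≤ t ∧ HasLyapunovVector (M - t • (1 : Matrix n n ℝ)) := by
  refine ⟨∑ i, |(M *ᵥ 1) i| + 1, by positivity, 1, fun _ => one_pos, fun i => ?_⟩
  have hle : (M *ᵥ 1) i ≤ ∑ i, |(M *ᵥ 1) i| := (le_abs_self _).trans <|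
    Finset.single_le_sum (f := fun i => |(M *ᵥ 1) i|) (fun _ _ => abs_nonneg _) (Finset.mem_univ i)
  simp only [sub_mulVec, smul_mulVec, one_mulVec, Pi.sub_apply, Pi.smul_apply, Pi.one_apply,
    smul_eq_mul, mul_one]
  linarith

namespace IsMetzler

section Entries

variable [DecidableEq n] {M : Matrix n n ℝ}

lemma sub_smul_one (hM : IsMetzler M) (t : ℝ) : IsMetzler (M - t • (1 : Matrix n n ℝ)) :=
  fun i j hij => by simpa [hij] using hM i j hij

lemma submatrix [DecidableEq m] (hM : IsMetzler M) {f : m → n} (hf : f.Injective) :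
    IsMetzler (M.submatrix f f) :=
  fun _ _ hij => hM _ _ (hf.ne hij)

lemma add (hM : IsMetzler M) {P : Matrix n n ℝ} (hP : ∀ i j, 0 ≤ P i j) : IsMetzler (M + P) :=
  fun i j hij => add_nonneg (hM i j hij) (hP i j)

end Entries

section LyapunovVector

variable [Fintype n] [DecidableEq n] {M : Matrix n n ℝ} {x : n → ℝ}

lemma mulVec_apply_nonneg_of_eq_zero (hM : IsMetzler M) (hx : 0 ≤ x) {i : n} (hi : x i = 0) :
    0 ≤ (M *ᵥ x) i := by
  refine Finset.sum_nonneg fun j _ => ?_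
  obtain rfl | hij := eq_or_ne i j
  · simp [hi]
  · exact mul_nonneg (hM i j hij) (hx j)

lemma pos_of_mulVec_neg (hM : IsMetzler M) (hx : 0 ≤ x) (hMx : ∀ i, (M *ᵥ x) i < 0) (i : n) :
    0 < x i :=
  (hx i).lt_of_ne fun hi => (hMx i).not_ge (hM.mulVec_apply_nonneg_of_eq_zero hx hi.symm)

lemma nonneg_of_mulVec_nonpos (hM : IsMetzler M) (hL : HasLyapunovVector M) (hMx : M *ᵥ x ≤ 0) :
    0 ≤ x := by
  obtain ⟨v, hv, hMv⟩ := hL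
  intro k
  have : Nonempty n := ⟨k⟩
  obtain ⟨i, hi⟩ := Finite.exists_min fun j => x j / v j
  set c := x i / v i with hc
  have hcv : ∀ j, c * v j ≤ x j := fun j => (le_div_iff₀ (hv j)).mp (hi j)
  -- `x - c v ≥ 0` vanishes at `i`, so `0 ≤ (M x) i - c (M v) i`, which forces `c ≥ 0`.
  have hrow : 0 ≤ (M *ᵥ (x - c • v)) i := by
    refine hM.mulVec_apply_nonneg_of_eq_zero (fun j => sub_nonneg.mpr (hcv j)) ?_
    simp [hc, div_mul_cancel₀ _ (hv i).ne']
  have hc_nonneg : 0 ≤ c := by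
    have hMxi : (M *ᵥ x) i ≤ 0 := hMx i
    simp only [mulVec_sub, mulVec_smul, Pi.sub_apply, Pi.smul_apply, smul_eq_mul] at hrow
    exact nonneg_of_mul_nonpos_left (by linarith) (hMv i)
  exact (mul_nonneg hc_nonneg (hv k).le).trans (hcv k)

lemma isHurwitz_of_hasLyapunovVector (hM : IsMetzler M) (hL : HasLyapunovVector M) :
    IsHurwitz M := by
  obtain ⟨v, hv, hMv⟩ := hL
  intro μ hμ
  by_contra! hre
  set K : Matrix n n ℂ := algebraMap ℂ (Matrix n n ℂ) μ - M.map Complex.ofReal with hK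
  have hdiag (i : n) : -M i i ≤ ‖K i i‖ := by
    have hKre : (K i i).re = μ.re - M i i := by simp [hK, algebraMap_matrix_apply]
    linarith [Complex.re_le_norm (K i i)]
  have hoff {i j : n} (hij : i ≠ j) : ‖K i j‖ = M i j := by
    simp [hK, algebraMap_matrix_apply, hij, abs_of_nonneg (hM i j hij)]
  have hdet : (K * diagonal fun i => (v i : ℂ)).det ≠ 0 := by
    refine det_ne_zero_of_sum_row_lt_diag fun i => ?_
    simp only [mul_diagonal, norm_mul, Complex.norm_real, Real.norm_of_nonneg (hv _).le]
    calc ∑ j ∈ Finset.univ.erase i, ‖K i j‖ * v j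
        = ∑ j ∈ Finset.univ.erase i, M i j * v j :=
          Finset.sum_congr rfl fun j hj => by rw [hoff (Finset.ne_of_mem_erase hj).symm]
      _ = (M *ᵥ v) i - M i i * v i := Finset.sum_erase_eq_sub (Finset.mem_univ i)
      _ < -M i i * v i := by linarith [hMv i]
      _ ≤ ‖K i i‖ * v i := mul_le_mul_of_nonneg_right (hdiag i) (hv i).le
  rw [det_mul] at hdet
  exact hμ ((isUnit_iff_isUnit_det K).mpr (left_ne_zero_of_mul hdet).isUnit)

lemma hasLyapunovVector_of_isHurwitz (hM : IsMetzler M) (hH : IsHurwitz M) :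
    HasLyapunovVector M := by
  let N (t : NNReal) : Matrix n n ℝ := M - (t : ℝ) • (1 : Matrix n n ℝ)
  let x (t : NNReal) : n → ℝ := -((N t)⁻¹ *ᵥ 1)
  have hN (t : NNReal) : IsUnit (N t).det := hH.isUnit_det_sub_smul_one t.2
  have hNx (t : NNReal) : N t *ᵥ x t = -1 := by
    simp only [x, mulVec_neg, mulVec_mulVec, mul_nonsing_inv _ (hN t), one_mulVec]
  have hNx_neg (t : NNReal) (i : n) : (N t *ᵥ x t) i < 0 := by simp [hNx]
  have hpos {t : NNReal} (ht : 0 ≤ x t) : ∀ i, 0 < x t i :=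
    (hM.sub_smul_one t).pos_of_mulVec_neg ht (hNx_neg t)
  have hx : Continuous x := by
    have hinv : Continuous fun t => (N t)⁻¹ := continuous_iff_continuousAt.mpr fun t =>
      (continuousAt_matrix_inv _ (NormedRing.inverse_continuousAt (hN t).unit)).comp
        (f := N) (by fun_prop)
    exact (hinv.matrix_mulVec continuous_const).neg
  have hclopen : IsClopen {t | 0 ≤ x t} := by
    refine ⟨isClosed_le continuous_const hx, ?_⟩
    have : {t | 0 ≤ x t} = ⋂ i, {t | 0 < x t i} := by
      ext t
      simpa using ⟨hpos, fun h i => (h i).le⟩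
    rw [this]
    exact isOpen_iInter_of_finite fun i => isOpen_lt continuous_const (by fun_prop)
  have hnonempty : {t | 0 ≤ x t}.Nonempty := by
    obtain ⟨t, ht, hL⟩ := exists_hasLyapunovVector_sub_smul_one M
    exact ⟨⟨t, ht⟩, (hM.sub_smul_one t).nonneg_of_mulVec_nonpos hL fun i => (hNx_neg ⟨t, ht⟩ i).le⟩
  have hzero : (0 : NNReal) ∈ {t | 0 ≤ x t} := hclopen.eq_univ hnonempty ▸ Set.mem_univ _
  exact ⟨x 0, hpos hzero, by simpa [N] using hNx_neg 0⟩

lemma isHurwitz_iff_hasLyapunovVector (hM : IsMetzler M) : IsHurwitz M ↔ HasLyapunovVector M :=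
  ⟨hM.hasLyapunovVector_of_isHurwitz, hM.isHurwitz_of_hasLyapunovVector⟩

lemma isHurwitz_iff_inv_nonpos (hM : IsMetzler M) :
    IsHurwitz M ↔ IsUnit M.det ∧ ∀ i j, M⁻¹ i j ≤ 0 := by
  refine ⟨fun hH => ⟨hH.isUnit_det, fun i j => ?_⟩, fun ⟨hu, hinv⟩ => ?_⟩
  · have hcol : 0 ≤ -M⁻¹.col j := by
      refine hM.nonneg_of_mulVec_nonpos (hM.isHurwitz_iff_hasLyapunovVector.mp hH) ?_
      rw [← mulVec_single_one, mulVec_neg, mulVec_mulVec, mul_nonsing_inv _ hH.isUnit_det,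
        one_mulVec, neg_nonpos]
      exact Pi.single_nonneg.mpr zero_le_one
    exact neg_nonneg.mp (hcol i)
  · have hneg (i : n) : (M *ᵥ -(M⁻¹ *ᵥ 1)) i < 0 := by
      simp [mulVec_neg, mul_nonsing_inv _ hu]
    have hnonneg : 0 ≤ -(M⁻¹ *ᵥ 1) := fun i =>
      neg_nonneg.mpr <| Finset.sum_nonpos fun j _ => by simpa using hinv i j
    exact hM.isHurwitz_iff_hasLyapunovVector.mpr ⟨_, hM.pos_of_mulVec_neg hnonneg hneg, hneg⟩

lemma isHurwitz_submatrix [Fintype m] [DecidableEq m] (hM : IsMetzler M) (hH : IsHurwitz M)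
    {f : m → n} (hf : f.Injective) : IsHurwitz (M.submatrix f f) := by
  obtain ⟨v, hv, hMv⟩ := hM.isHurwitz_iff_hasLyapunovVector.mp hH
  refine (hM.submatrix hf).isHurwitz_iff_hasLyapunovVector.mpr
    ⟨v ∘ f, fun i => hv _, fun i => lt_of_le_of_lt ?_ (hMv (f i))⟩
  calc (M.submatrix f f *ᵥ (v ∘ f)) i
      = ∑ j ∈ Finset.univ.map ⟨f, hf⟩, M (f i) j * v j := by simp [mulVec, dotProduct]
    _ ≤ ∑ j, M (f i) j * v j := by
        refine Finset.sum_le_sum_of_subset_of_nonneg (Finset.subset_univ _) fun j _ hj => ?_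
        have hij : f i ≠ j := by
          rintro rfl
          exact hj (by simp)
        exact mul_nonneg (hM _ _ hij) (hv j).le

end LyapunovVector

end IsMetzler

lemma isMetzler_fromBlocks_iff [DecidableEq m] [DecidableEq n] {A : Matrix m m ℝ}
    {B : Matrix m n ℝ} {C : Matrix n m ℝ} {D : Matrix n n ℝ} :
    IsMetzler (fromBlocks A B C D) ↔
      IsMetzler A ∧ (∀ i j, 0 ≤ B i j) ∧ (∀ i j, 0 ≤ C i j) ∧ IsMetzler D := by
  simp only [IsMetzler, Sum.forall, fromBlocks_apply₁₁, fromBlocks_apply₁₂, fromBlocks_apply₂₁,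
    fromBlocks_apply₂₂, ne_eq, Sum.inl.injEq, Sum.inr.injEq, reduceCtorEq, not_false_eq_true,
    forall_true_left, forall_and]
  tauto

namespace IsMetzler

variable [Fintype m] [DecidableEq m] [DecidableEq n]
  {A : Matrix m m ℝ} {B : Matrix m n ℝ} {C : Matrix n m ℝ} {D : Matrix n n ℝ}

lemma schurComplement (hM : IsMetzler (fromBlocks A B C D)) (hA : IsHurwitz A) :
    IsMetzler (D - C * A⁻¹ * B) := by
  obtain ⟨hA_metzler, hB, hC, hD⟩ := isMetzler_fromBlocks_iff.mp hM
  have hN : ∀ i j, 0 ≤ (-A⁻¹) i j := fun i j =>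
    neg_nonneg.mpr ((hA_metzler.isHurwitz_iff_inv_nonpos.mp hA).2 i j)
  simpa [sub_eq_add_neg] using hD.add (mul_apply_nonneg (mul_apply_nonneg hC hN) hB)

variable [Fintype n]

lemma inv_fromBlocks_nonpos (hM : IsMetzler (fromBlocks A B C D)) (hA : IsHurwitz A)
    (hS : IsHurwitz (D - C * A⁻¹ * B)) (i j : m ⊕ n) : (fromBlocks A B C D)⁻¹ i j ≤ 0 := by
  obtain ⟨hA_metzler, hB, hC, -⟩ := isMetzler_fromBlocks_iff.mp hM
  obtain ⟨hA_unit, hA_inv⟩ := hA_metzler.isHurwitz_iff_inv_nonpos.mp hA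
  obtain ⟨hS_unit, hS_inv⟩ := (hM.schurComplement hA).isHurwitz_iff_inv_nonpos.mp hS
  rw [inv_fromBlocks_of_isUnit_det hA_unit hS_unit]
  set S := D - C * A⁻¹ * B
  have hN : ∀ i j, 0 ≤ (-A⁻¹) i j := fun i j => neg_nonneg.mpr (hA_inv i j)
  have hT : ∀ i j, 0 ≤ (-S⁻¹) i j := fun i j => neg_nonneg.mpr (hS_inv i j)
  have hNBT := mul_apply_nonneg (mul_apply_nonneg hN hB) hT
  have hTCN := mul_apply_nonneg (mul_apply_nonneg hT hC) hN
  have hNBTCN := mul_apply_nonneg (mul_apply_nonneg hNBT hC) hN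
  simp only [Matrix.mul_neg, Matrix.neg_mul, neg_neg, Matrix.neg_apply] at hNBT hTCN hNBTCN
  rcases i with i | i <;> rcases j with j | j
  · exact add_nonpos (hA_inv i j) (neg_nonneg.mp (hNBTCN i j))
  · exact neg_nonpos.mpr (hNBT i j)
  · exact neg_nonpos.mpr (hTCN i j)
  · exact hS_inv i j

lemma isHurwitz_fromBlocks_iff_of_isHurwitz (hM : IsMetzler (fromBlocks A B C D))
    (hA : IsHurwitz A) :
    IsHurwitz (fromBlocks A B C D) ↔ IsHurwitz (D - C * A⁻¹ * B) := by
  refine ⟨fun hH => ?_, fun hS => hM.isHurwitz_iff_inv_nonpos.mpr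
    ⟨(isUnit_det_fromBlocks_iff hA.isUnit_det).mpr hS.isUnit_det, hM.inv_fromBlocks_nonpos hA hS⟩⟩
  obtain ⟨hM_unit, hM_inv⟩ := hM.isHurwitz_iff_inv_nonpos.mp hH
  have hS_unit := (isUnit_det_fromBlocks_iff hA.isUnit_det).mp hM_unit
  rw [inv_fromBlocks_of_isUnit_det hA.isUnit_det hS_unit] at hM_inv
  exact (hM.schurComplement hA).isHurwitz_iff_inv_nonpos.mpr
    ⟨hS_unit, fun i j => hM_inv (Sum.inr i) (Sum.inr j)⟩

lemma isHurwitz_fromBlocks_iff_schurComplement (hM : IsMetzler (fromBlocks A B C D)) :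
    IsHurwitz (fromBlocks A B C D) ↔
      IsUnit A.det ∧ IsHurwitz A ∧ IsMetzler A ∧
        IsHurwitz (D - C * A⁻¹ * B) ∧ IsMetzler (D - C * A⁻¹ * B) := by
  refine ⟨fun hH => ?_,
    fun ⟨_, hA, _, hS, _⟩ => (hM.isHurwitz_fromBlocks_iff_of_isHurwitz hA).mpr hS⟩
  have hA : IsHurwitz A := hM.isHurwitz_submatrix hH Sum.inl_injective
  exact ⟨hA.isUnit_det, hA, (isMetzler_fromBlocks_iff.mp hM).1,
    (hM.isHurwitz_fromBlocks_iff_of_isHurwitz hA).mp hH, hM.schurComplement hA⟩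

lemma isHurwitz_fromBlocks_swap (hM : IsMetzler (fromBlocks A B C D))
    (hH : IsHurwitz (fromBlocks A B C D)) : IsHurwitz (fromBlocks D C B A) := by
  simpa using hM.isHurwitz_submatrix hH Sum.swap_leftInverse.injective

end IsMetzler

theorem metzler_hurwitz_schur_complement_general [Fintype m] [DecidableEq m] [Fintype n]
    [DecidableEq n] (A₁₁ : Matrix m m ℝ) (A₁₂ : Matrix m n ℝ) (A₂₁ : Matrix n m ℝ)
    (A₂₂ : Matrix n n ℝ) (hMetzler : IsMetzler (fromBlocks A₁₁ A₁₂ A₂₁ A₂₂)) :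
    (IsHurwitz (fromBlocks A₁₁ A₁₂ A₂₁ A₂₂) ↔
      (IsUnit A₁₁.det ∧ IsHurwitz A₁₁ ∧ IsMetzler A₁₁ ∧
        IsHurwitz (A₂₂ - A₂₁ * A₁₁⁻¹ * A₁₂) ∧ IsMetzler (A₂₂ - A₂₁ * A₁₁⁻¹ * A₁₂))) ∧
    (IsHurwitz (fromBlocks A₁₁ A₁₂ A₂₁ A₂₂) ↔
      (IsUnit A₂₂.det ∧ IsHurwitz A₂₂ ∧ IsMetzler A₂₂ ∧
        IsHurwitz (A₁₁ - A₁₂ * A₂₂⁻¹ * A₂₁) ∧ IsMetzler (A₁₁ - A₁₂ * A₂₂⁻¹ * A₂₁))) := by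
  have hSwap : IsMetzler (fromBlocks A₂₂ A₂₁ A₁₂ A₁₁) := by
    simpa using hMetzler.submatrix Sum.swap_leftInverse.injective
  have hSwap_iff : IsHurwitz (fromBlocks A₁₁ A₁₂ A₂₁ A₂₂) ↔
      IsHurwitz (fromBlocks A₂₂ A₂₁ A₁₂ A₁₁) :=
    ⟨hMetzler.isHurwitz_fromBlocks_swap, hSwap.isHurwitz_fromBlocks_swap⟩
  exact ⟨hMetzler.isHurwitz_fromBlocks_iff_schurComplement,
    hSwap_iff.trans hSwap.isHurwitz_fromBlocks_iff_schurComplement⟩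

/-- **Souza–Deaecto–Geromel / Narendra–Shorten.** Let
`A = [A₁₁, A₁₂; A₂₁, A₂₂]` be a Metzler matrix partitioned in blocks with
`A₁₁` and `A₂₂` square. Then `A` is Hurwitz iff `A₁₁` is an invertible Hurwitz
Metzler matrix and its Schur complement `A₂₂ - A₂₁ A₁₁⁻¹ A₁₂` is a Hurwitz
Metzler matrix, iff `A₂₂` is an invertible Hurwitz Metzler matrix and its
Schur complement `A₁₁ - A₁₂ A₂₂⁻¹ A₂₁` is a Hurwitz Metzler matrix. -/
theorem metzler_hurwitz_schur_complement {p q : ℕ}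
    (A₁₁ : Matrix (Fin p) (Fin p) ℝ) (A₁₂ : Matrix (Fin p) (Fin q) ℝ)
    (A₂₁ : Matrix (Fin q) (Fin p) ℝ) (A₂₂ : Matrix (Fin q) (Fin q) ℝ)
    (hMetzler : IsMetzler (Matrix.fromBlocks A₁₁ A₁₂ A₂₁ A₂₂)) :
    (IsHurwitz (Matrix.fromBlocks A₁₁ A₁₂ A₂₁ A₂₂) ↔
      (IsUnit A₁₁.det ∧ IsHurwitz A₁₁ ∧ IsMetzler A₁₁ ∧
        IsHurwitz (A₂₂ - A₂₁ * A₁₁⁻¹ * A₁₂) ∧ IsMetzler (A₂₂ - A₂₁ * A₁₁⁻¹ * A₁₂))) ∧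
    (IsHurwitz (Matrix.fromBlocks A₁₁ A₁₂ A₂₁ A₂₂) ↔
      (IsUnit A₂₂.det ∧ IsHurwitz A₂₂ ∧ IsMetzler A₂₂ ∧
        IsHurwitz (A₁₁ - A₁₂ * A₂₂⁻¹ * A₂₁) ∧ IsMetzler (A₁₁ - A₁₂ * A₂₂⁻¹ * A₂₁))) :=
  metzler_hurwitz_schur_complement_general A₁₁ A₁₂ A₂₁ A₂₂ hMetzler
end
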